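/- Let G be a finite abelian group, H ≤ G, k ≥ 0, δ ∈ (0,1), and let A ⊆ G have VC-dimension at most k relative to H. Then |Stab_δ(A) ∩ H| ≥ (δ/30)^k |H|. -/

import Mathlib

/-!
The translates of `A` by elements of `H` form a set family of VC-dimension at most `k`. A maximal
set `X ⊆ H` whose translates are pairwise more than `δ|G|` apart has at most `(30/δ)^k` elements by
Haussler's packing lemma, and by maximality `H` is covered by `|X|` translates of `Stab_δ(A) ∩ H`.

Haussler's lemma is proved by double counting. Sample points `x₁, …, xₘ` and weight each `Q ⊆ [m]`
by the number of members of the family whose trace on the sample is `Q`. Since the one-inclusion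
graph of a family of VC-dimension `d` has at most `d` times as many edges as vertices, the total
weight of the edges of the cube is at most `d` times the size of the family. On the other hand,
once all points but `xᵢ` are fixed, the family falls into few classes by Sauer–Shelah, and
separation forces a random `xᵢ` to split each class substantially; this bounds the expected weight
of the edges in direction `i` from below.
-/

section SetFamily

open Finset
open scoped symmDiff

section VCDim

variable {α : Type*} [DecidableEq α] {𝒜 : Finset (Finset α)} {a : α} {d : ℕ}

theorem vcDim_le_iff : 𝒜.vcDim ≤ d ↔ ∀ s, 𝒜.Shatters s → #s ≤ d := by
  simp only [vcDim, Finset.sup_le_iff, mem_shatterer]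

theorem notMem_of_shatters {s : Finset α} (h𝒜 : ∀ t ∈ 𝒜, a ∉ t) (hs : 𝒜.Shatters s) : a ∉ s :=
  fun ha => let ⟨t, ht, hst⟩ := hs.exists_superset; h𝒜 t ht (hst ha)

theorem card_le_sum_choose_vcDim [Fintype α] (𝒜 : Finset (Finset α)) :
    #𝒜 ≤ ∑ j ∈ Iic 𝒜.vcDim, (Fintype.card α).choose j :=
  (card_le_card_shatterer 𝒜).trans card_shatterer_le_sum_vcDim

theorem vcDim_image_erase_le (𝒜 : Finset (Finset α)) (a : α) :
    (𝒜.image fun s => s.erase a).vcDim ≤ 𝒜.vcDim := by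
  refine vcDim_le_iff.2 fun s hs => Shatters.card_le_vcDim fun r hr => ?_
  have ha : a ∉ s := notMem_of_shatters (by simp) hs
  obtain ⟨_, hu, rfl⟩ := hs hr
  obtain ⟨t, ht, rfl⟩ := mem_image.1 hu
  exact ⟨t, ht, by rw [inter_erase, ← erase_inter, erase_eq_of_notMem ha]⟩

end VCDim

section OneInclusionGraph

variable {α : Type*} [DecidableEq α]

/-- The edges in direction `a` of the one-inclusion graph of `𝒜`, in which two members of `𝒜` are
adjacent when they differ in one element. The edge joining `s` and `insert a s`, where `a ∉ s`, is
represented by `s`. -/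
def oneInclusionEdges (𝒜 : Finset (Finset α)) (a : α) : Finset (Finset α) :=
  𝒜.memberSubfamily a ∩ 𝒜.nonMemberSubfamily a

theorem mem_oneInclusionEdges {𝒜 : Finset (Finset α)} {a : α} {s : Finset α} :
    s ∈ oneInclusionEdges 𝒜 a ↔ a ∉ s ∧ s ∈ 𝒜 ∧ insert a s ∈ 𝒜 := by
  simp only [oneInclusionEdges, mem_inter, mem_memberSubfamily, mem_nonMemberSubfamily]
  tauto

theorem card_image_erase_add_card_oneInclusionEdges (𝒜 : Finset (Finset α)) (a : α) :
    #(𝒜.image fun s => s.erase a) + #(oneInclusionEdges 𝒜 a) = #𝒜 := by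
  rw [← memberSubfamily_union_nonMemberSubfamily, oneInclusionEdges, card_union_add_card_inter,
    card_memberSubfamily_add_card_nonMemberSubfamily]

theorem vcDim_oneInclusionEdges_lt {𝒜 : Finset (Finset α)} {a : α}
    (h : (oneInclusionEdges 𝒜 a).Nonempty) : (oneInclusionEdges 𝒜 a).vcDim < 𝒜.vcDim := by
  have insert_shatters : ∀ s, (oneInclusionEdges 𝒜 a).Shatters s → #s + 1 ≤ 𝒜.vcDim := by
    intro s hs
    have ha : a ∉ s := notMem_of_shatters (fun t ht => (mem_oneInclusionEdges.1 ht).1) hs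
    rw [← card_insert_of_notMem ha]
    refine Shatters.card_le_vcDim fun r hr => ?_
    obtain ⟨t, ht, hst⟩ := hs (subset_insert_iff.1 hr)
    obtain ⟨hat, ht, hit⟩ := mem_oneInclusionEdges.1 ht
    by_cases har : a ∈ r
    · exact ⟨insert a t, hit, by rw [← insert_inter_distrib, hst, insert_erase har]⟩
    · exact ⟨t, ht, by rw [insert_inter_of_notMem hat, hst, erase_eq_of_notMem har]⟩
  have hpos : 0 < 𝒜.vcDim := insert_shatters ∅ (shatters_empty.2 h)
  have hle : (oneInclusionEdges 𝒜 a).vcDim ≤ 𝒜.vcDim - 1 :=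
    vcDim_le_iff.2 fun s hs => Nat.le_sub_one_of_lt (insert_shatters s hs)
  omega

theorem card_oneInclusionEdges_add_le (𝒜 ℬ : Finset (Finset α)) (a : α) :
    #(oneInclusionEdges 𝒜 a) + #(oneInclusionEdges ℬ a) ≤
      #(oneInclusionEdges (𝒜 ∪ ℬ) a) + #(oneInclusionEdges (𝒜 ∩ ℬ) a) := by
  rw [← card_union_add_card_inter]
  gcongr <;> intro s <;> simp only [mem_union, mem_inter, mem_oneInclusionEdges] <;> tauto

theorem card_oneInclusionEdges_eq_add (𝒜 : Finset (Finset α)) {a b : α} (hab : a ≠ b) :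
    #(oneInclusionEdges 𝒜 b) = #(oneInclusionEdges (𝒜.memberSubfamily a) b) +
      #(oneInclusionEdges (𝒜.nonMemberSubfamily a) b) := by
  rw [← card_memberSubfamily_add_card_nonMemberSubfamily a]
  congr 2 <;> ext s <;>
    simp only [mem_memberSubfamily, mem_nonMemberSubfamily, mem_oneInclusionEdges, mem_insert,
      insert_comm b a] <;>
    grind

/-- The edge bound of Haussler, Littlestone and Warmuth. -/
theorem sum_card_oneInclusionEdges_le (u : Finset α) (𝒜 : Finset (Finset α)) :
    ∑ a ∈ u, #(oneInclusionEdges 𝒜 a) ≤ 𝒜.vcDim * #𝒜 := by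
  induction u using Finset.induction_on generalizing 𝒜 with
  | empty => simp
  | insert a u ha ih =>
    set ℰ := oneInclusionEdges 𝒜 a
    set 𝒟 := 𝒜.image fun s => s.erase a with h𝒟
    have hrec : ∀ b ∈ u, #(oneInclusionEdges 𝒜 b) ≤
        #(oneInclusionEdges 𝒟 b) + #(oneInclusionEdges ℰ b) := fun b hb => by
      rw [card_oneInclusionEdges_eq_add 𝒜 (ne_of_mem_of_not_mem hb ha).symm, h𝒟,
        ← memberSubfamily_union_nonMemberSubfamily]
      exact card_oneInclusionEdges_add_le _ _ b
    have hℰ_le : #ℰ + ∑ b ∈ u, #(oneInclusionEdges ℰ b) ≤ 𝒜.vcDim * #ℰ := by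
      rcases ℰ.eq_empty_or_nonempty with h | h
      · simpa [h] using ih ∅
      · calc #ℰ + ∑ b ∈ u, #(oneInclusionEdges ℰ b) ≤ #ℰ + ℰ.vcDim * #ℰ := by gcongr; exact ih ℰ
          _ = (ℰ.vcDim + 1) * #ℰ := by ring
          _ ≤ 𝒜.vcDim * #ℰ := by gcongr; exact vcDim_oneInclusionEdges_lt h
    calc ∑ b ∈ insert a u, #(oneInclusionEdges 𝒜 b)
        ≤ #ℰ + (∑ b ∈ u, #(oneInclusionEdges 𝒟 b) + ∑ b ∈ u, #(oneInclusionEdges ℰ b)) := by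
          rw [sum_insert ha, ← sum_add_distrib]
          gcongr with b hb
          exact hrec b hb
      _ ≤ 𝒟.vcDim * #𝒟 + 𝒜.vcDim * #ℰ := by linarith [ih 𝒟]
      _ ≤ 𝒜.vcDim * #𝒟 + 𝒜.vcDim * #ℰ := 
          Nat.add_le_add_right (Nat.mul_le_mul_right _ (vcDim_image_erase_le 𝒜 a)) _
      _ = 𝒜.vcDim * #𝒜 := by rw [← mul_add, card_image_erase_add_card_oneInclusionEdges]

end OneInclusionGraph

section EdgeWeight

theorem sum_eq_sum_card_filter_lt {β : Type*} {s : Finset β} {f : β → ℕ} {N : ℕ}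
    (hf : ∀ x ∈ s, f x ≤ N) : ∑ x ∈ s, f x = ∑ t ∈ range N, #{x ∈ s | t < f x} := by
  calc ∑ x ∈ s, f x = ∑ x ∈ s, #{t ∈ range N | t < f x} := sum_congr rfl fun x hx => by
        have : {t ∈ range N | t < f x} = range (f x) := by
          ext t
          simpa using (hf x hx).trans_lt'
        rw [this, card_range]
    _ = ∑ t ∈ range N, #{x ∈ s | t < f x} :=
        sum_card_bipartiteAbove_eq_sum_card_bipartiteBelow fun x t => t < f x

variable {ι : Type*} [Fintype ι] [DecidableEq ι]

/-- The total weight of the edges in direction `i` of the cube of subsets of `ι`, when each vertex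
`Q` carries the weight `w Q` and an edge the smaller of the weights of its endpoints. For the
indicator of a family this counts the edges of its one-inclusion graph. -/
def edgeWeight (w : Finset ι → ℕ) (i : ι) : ℕ :=
  ∑ Q with i ∉ Q, min (w Q) (w (insert i Q))

theorem edgeWeight_eq_sum_card_oneInclusionEdges {w : Finset ι → ℕ} {N : ℕ} (hw : ∀ Q, w Q ≤ N)
    (i : ι) : edgeWeight w i = ∑ t ∈ range N, #(oneInclusionEdges {Q | t < w Q} i) := by
  rw [edgeWeight, sum_eq_sum_card_filter_lt fun Q _ => (min_le_left _ _).trans (hw Q)]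
  congr! 2 with t
  ext Q
  simp only [mem_filter, mem_univ, true_and, lt_min_iff, mem_oneInclusionEdges]

theorem sum_edgeWeight_le (w : Finset ι → ℕ) :
    ∑ i, edgeWeight w i ≤ ({Q | 0 < w Q} : Finset (Finset ι)).vcDim * ∑ Q, w Q := by
  set d := ({Q | 0 < w Q} : Finset (Finset ι)).vcDim
  have hN : ∀ Q, w Q ≤ ∑ Q, w Q := fun Q => single_le_sum_of_canonicallyOrdered (mem_univ Q)
  calc ∑ i, edgeWeight w i
      = ∑ t ∈ range (∑ Q, w Q), ∑ i, #(oneInclusionEdges {Q | t < w Q} i) := by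
        simp only [edgeWeight_eq_sum_card_oneInclusionEdges hN]
        exact sum_comm
    _ ≤ ∑ t ∈ range (∑ Q, w Q), d * #{Q | t < w Q} := by
        gcongr with t
        refine (sum_card_oneInclusionEdges_le univ _).trans ?_
        gcongr
        exact vcDim_mono (monotone_filter_right _ fun Q _ => t.zero_le.trans_lt)
    _ = d * ∑ Q, w Q := by rw [← mul_sum, ← sum_eq_sum_card_filter_lt fun Q _ => hN Q]

end EdgeWeight

section Separated

variable {α : Type*} [Fintype α] [DecidableEq α] {ε : ℝ}

theorem sum_card_symmDiff (C : Finset (Finset α)) :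
    ∑ T ∈ C, ∑ T' ∈ C, #(T ∆ T') = 2 * ∑ g, #{T ∈ C | g ∉ T} * #{T ∈ C | g ∈ T} := by
  have card_symmDiff : ∀ T T' : Finset α, #(T ∆ T') =
      ∑ g, ((if g ∉ T then 1 else 0) * (if g ∈ T' then 1 else 0) +
        (if g ∈ T then 1 else 0) * (if g ∉ T' then 1 else 0)) := fun T T' => by
    rw [← filter_univ_mem (T ∆ T'), card_filter]
    refine sum_congr rfl fun g _ => ?_
    by_cases h : g ∈ T <;> by_cases h' : g ∈ T' <;> simp [mem_symmDiff, h, h']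
  have sum_at : ∀ g, ∑ T ∈ C, ∑ T' ∈ C, ((if g ∉ T then 1 else 0) * (if g ∈ T' then 1 else 0) +
      (if g ∈ T then 1 else 0) * (if g ∉ T' then 1 else 0)) =
        2 * (#{T ∈ C | g ∉ T} * #{T ∈ C | g ∈ T}) := fun g => by
    simp only [sum_add_distrib, ← sum_mul_sum, ← card_filter]
    ring
  simp only [card_symmDiff, sum_comm (s := C) (t := univ), sum_at, mul_sum]

theorem le_sum_min_card_filter {C : Finset (Finset α)}
    (hsep : (C : Set (Finset α)).Pairwise fun T T' => ε ≤ #(T ∆ T')) (hC : C.Nonempty) :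
    ε / 2 * (#C - 1) ≤ ∑ g, (min #{T ∈ C | g ∉ T} #{T ∈ C | g ∈ T} : ℝ) := by
  have hpairs : ε * (#C * (#C - 1)) ≤ ∑ T ∈ C, ∑ T' ∈ C, (#(T ∆ T') : ℝ) := by
    calc ε * (#C * (#C - 1)) = ∑ _p ∈ C.offDiag, ε := by
          rw [sum_const, offDiag_card, nsmul_eq_mul, Nat.cast_sub (Nat.le_mul_self _)]
          push_cast
          ring
      _ ≤ ∑ p ∈ C.offDiag, (#(p.1 ∆ p.2) : ℝ) := by
          gcongr with _ hp
          obtain ⟨h₁, h₂, hne⟩ := mem_offDiag.1 hp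
          exact hsep h₁ h₂ hne
      _ ≤ ∑ p ∈ C ×ˢ C, (#(p.1 ∆ p.2) : ℝ) := by
          refine sum_le_sum_of_subset_of_nonneg (fun p hp => ?_) fun _ _ _ => Nat.cast_nonneg _
          exact mem_product.2 ⟨(mem_offDiag.1 hp).1, (mem_offDiag.1 hp).2.1⟩
      _ = ∑ T ∈ C, ∑ T' ∈ C, (#(T ∆ T') : ℝ) := sum_product ..
  have hmin : ∀ g, (#{T ∈ C | g ∉ T} : ℝ) * #{T ∈ C | g ∈ T} ≤
      #C * (min #{T ∈ C | g ∉ T} #{T ∈ C | g ∈ T} : ℝ) := fun g => by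
    rw [← max_mul_min]
    gcongr
    exact_mod_cast max_le (card_filter_le _ _) (card_filter_le _ _)
  have hC₀ : (0 : ℝ) < #C := by exact_mod_cast hC.card_pos
  refine le_of_mul_le_mul_left ?_ hC₀
  calc #C * (ε / 2 * (#C - 1)) = ε * (#C * (#C - 1)) / 2 := by ring
    _ ≤ (∑ T ∈ C, ∑ T' ∈ C, (#(T ∆ T') : ℝ)) / 2 := by gcongr
    _ = ∑ g, (#{T ∈ C | g ∉ T} : ℝ) * #{T ∈ C | g ∈ T} := by
        rw [div_eq_iff two_ne_zero, mul_comm]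
        exact_mod_cast sum_card_symmDiff C
    _ ≤ #C * ∑ g, (min #{T ∈ C | g ∉ T} #{T ∈ C | g ∈ T} : ℝ) := by
        rw [mul_sum]
        exact sum_le_sum fun g _ => hmin g

theorem le_sum_sum_min_card_fiber {β : Type*} [DecidableEq β] {F : Finset (Finset α)}
    (hsep : (F : Set (Finset α)).Pairwise fun T T' => ε ≤ #(T ∆ T')) (c : Finset α → β) :
    ε / 2 * (#F - #(F.image c)) ≤ ∑ g, ∑ b ∈ F.image c,
      (min #{T ∈ F | c T = b ∧ g ∉ T} #{T ∈ F | c T = b ∧ g ∈ T} : ℝ) := by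
  calc ε / 2 * (#F - #(F.image c)) = ∑ b ∈ F.image c, ε / 2 * (#{T ∈ F | c T = b} - 1 : ℝ) := by
        rw [← mul_sum, sum_sub_distrib, ← Nat.cast_sum,
          ← card_eq_sum_card_fiberwise fun T hT => mem_image_of_mem c hT, sum_const, nsmul_one]
    _ ≤ ∑ b ∈ F.image c, ∑ g, (min #{T ∈ {T ∈ F | c T = b} | g ∉ T}
          #{T ∈ {T ∈ F | c T = b} | g ∈ T} : ℝ) := by
        gcongr with b hb
        refine le_sum_min_card_filter (hsep.mono (filter_subset _ F)) ?_
        exact fiber_nonempty_iff_mem_image.2 hb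
    _ = _ := by simp only [sum_comm (s := F.image c), filter_filter]

end Separated

section Trace

variable {α ι : Type*} [DecidableEq α] [Fintype ι]

/-- The trace of the set `T` on the tuple of sample points `x`, recorded as a set of indices so that
repeated points are allowed. -/
def trace (x : ι → α) (T : Finset α) : Finset ι :=
  {i | x i ∈ T}

theorem mem_trace {x : ι → α} {T : Finset α} {i : ι} : i ∈ trace x T ↔ x i ∈ T :=
  mem_filter_univ i

variable [DecidableEq ι]

theorem trace_update (x : ι → α) (i : ι) (g : α) (T : Finset α) :
    trace (Function.update x i g) T =
      if g ∈ T then insert i ((trace x T).erase i) else (trace x T).erase i := by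
  ext j
  obtain rfl | hj := eq_or_ne j i
  · split_ifs with hg <;> simp [mem_trace, hg]
  · split_ifs <;> simp [mem_trace, hj]

theorem vcDim_image_trace_le (F : Finset (Finset α)) (x : ι → α) :
    (F.image (trace x)).vcDim ≤ F.vcDim := by
  refine vcDim_le_iff.2 fun s hs => ?_
  have exists_mem : ∀ r ⊆ s, ∃ T ∈ F, ∀ i ∈ s, x i ∈ T ↔ i ∈ r := fun r hr => by
    obtain ⟨_, hu, rfl⟩ := hs hr
    obtain ⟨T, hT, rfl⟩ := mem_image.1 hu
    exact ⟨T, hT, fun i hi => by simp [mem_trace, hi]⟩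
  have hinj : Set.InjOn x s := fun i hi j hj hij => by
    obtain ⟨T, -, hT⟩ := exists_mem {i} (singleton_subset_iff.2 hi)
    have hiT : x i ∈ T := (hT i hi).2 (mem_singleton_self i)
    exact (mem_singleton.1 ((hT j hj).1 (hij ▸ hiT))).symm
  rw [← card_image_of_injOn hinj]
  refine Shatters.card_le_vcDim fun r hr => ?_
  obtain ⟨T, hT, hTr⟩ := exists_mem {i ∈ s | x i ∈ r} (filter_subset _ s)
  exact ⟨T, hT, by grind⟩

/-- The number of members of `F` having a given trace on the tuple `x`: the weight put on the cube
of subsets of `ι` in the proof of Haussler's packing lemma. -/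
def traceCount (F : Finset (Finset α)) (x : ι → α) (Q : Finset ι) : ℕ :=
  #{T ∈ F | trace x T = Q}

theorem sum_traceCount (F : Finset (Finset α)) (x : ι → α) : ∑ Q, traceCount F x Q = #F :=
  (card_eq_sum_card_fiberwise fun T _ => mem_coe.2 (mem_univ (trace x T))).symm

theorem sum_edgeWeight_traceCount_le (F : Finset (Finset α)) (x : ι → α) :
    ∑ i, edgeWeight (traceCount F x) i ≤ F.vcDim * #F := by
  have hsupp : ({Q | 0 < traceCount F x Q} : Finset (Finset ι)) = F.image (trace x) := by
    ext Q
    simp only [mem_filter_univ, traceCount, card_pos, fiber_nonempty_iff_mem_image]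
  calc ∑ i, edgeWeight (traceCount F x) i ≤ (F.image (trace x)).vcDim * #F := by
        simpa only [hsupp, sum_traceCount] using sum_edgeWeight_le (traceCount F x)
    _ ≤ F.vcDim * #F := by gcongr; exact vcDim_image_trace_le F x

theorem edgeWeight_traceCount_update (F : Finset (Finset α)) (x : ι → α) (i : ι) (g : α) :
    edgeWeight (traceCount F (Function.update x i g)) i =
      ∑ Q ∈ F.image fun T => (trace x T).erase i,
        min #{T ∈ F | (trace x T).erase i = Q ∧ g ∉ T}
          #{T ∈ F | (trace x T).erase i = Q ∧ g ∈ T} := by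
  have hnotMem : ∀ Q, i ∉ Q → traceCount F (Function.update x i g) Q =
      #{T ∈ F | (trace x T).erase i = Q ∧ g ∉ T} := fun Q hQ => by
    simp only [traceCount, trace_update]
    congr! 3 with T
    grind
  have hinsert : ∀ Q, i ∉ Q → traceCount F (Function.update x i g) (insert i Q) =
      #{T ∈ F | (trace x T).erase i = Q ∧ g ∈ T} := fun Q hQ => by
    simp only [traceCount, trace_update]
    congr! 3 with T
    have hcancel : insert i ((trace x T).erase i) = insert i Q ↔ (trace x T).erase i = Q :=
      ⟨fun h => by simpa [hQ] using congrArg (fun S => S.erase i) h, fun h => h ▸ rfl⟩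
    have hne : (trace x T).erase i ≠ insert i Q := fun h =>
      notMem_erase i (trace x T) (h ▸ mem_insert_self i Q)
    split_ifs with hg <;> simp [hg, hcancel, hne]
  have hsub : (F.image fun T => (trace x T).erase i) ⊆ ({Q | i ∉ Q} : Finset (Finset ι)) := by
    simp [image_subset_iff]
  rw [edgeWeight, ← sum_subset hsub]
  · refine sum_congr rfl fun Q hQ => ?_
    have hi : i ∉ Q := (mem_filter_univ Q).1 (hsub hQ)
    rw [hnotMem Q hi, hinsert Q hi]
  · intro Q hi hQ
    rw [hnotMem Q ((mem_filter_univ Q).1 hi), Nat.min_eq_zero_iff]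
    left
    rw [card_eq_zero, filter_eq_empty_iff]
    exact fun T hT h => hQ (mem_image.2 ⟨T, hT, h.1⟩)

theorem card_image_erase_trace_le (F : Finset (Finset α)) (x : ι → α) (i : ι) :
    #(F.image fun T => (trace x T).erase i) ≤
      ∑ j ∈ Iic F.vcDim, (Fintype.card ι).choose j := by
  have hvc : (F.image fun T => (trace x T).erase i).vcDim ≤ F.vcDim := by
    rw [← Function.comp_def (fun s => s.erase i) (trace x), ← image_image]
    exact (vcDim_image_erase_le _ i).trans (vcDim_image_trace_le F x)
  refine (card_le_sum_choose_vcDim _).trans ?_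
  gcongr

theorem le_sum_edgeWeight_traceCount_update [Fintype α] {F : Finset (Finset α)} {ε : ℝ}
    (hε : 0 ≤ ε) (hsep : (F : Set (Finset α)).Pairwise fun T T' => ε ≤ #(T ∆ T')) (x : ι → α)
    (i : ι) :
    ε / 2 * (#F - ∑ j ∈ Iic F.vcDim, (Fintype.card ι).choose j) ≤
      ∑ g, (edgeWeight (traceCount F (Function.update x i g)) i : ℝ) := by
  calc ε / 2 * (#F - ∑ j ∈ Iic F.vcDim, (Fintype.card ι).choose j)
      ≤ ε / 2 * (#F - #(F.image fun T => (trace x T).erase i)) := by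
        gcongr
        exact_mod_cast card_image_erase_trace_le F x i
    _ ≤ _ := le_sum_sum_min_card_fiber hsep _
    _ = _ := by
        simp only [edgeWeight_traceCount_update]
        push_cast
        rfl

end Trace

section Haussler

theorem sum_sum_update {α ι M : Type*} [Fintype α] [Fintype ι] [DecidableEq ι] [AddCommMonoid M]
    (f : (ι → α) → M) (i : ι) :
    ∑ x, ∑ g, f (Function.update x i g) = Fintype.card α • ∑ x, f x := by
  have hinv : Function.Involutive fun p : (ι → α) × α => (Function.update p.1 i p.2, p.1 i) :=
    fun p => by simp
  have hcard : Fintype.card α • ∑ x, f x = ∑ x, ∑ _g : α, f x := by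
    simp only [sum_const, card_univ, smul_sum]
  rw [hcard, ← Fintype.sum_prod_type' (f := fun x g => f (Function.update x i g)),
    ← Fintype.sum_prod_type' (f := fun x (_ : α) => f x)]
  exact Equiv.sum_comp hinv.toPerm fun p => f p.1

variable {α : Type*} [Fintype α] [DecidableEq α] {F : Finset (Finset α)} {δ : ℝ}

theorem card_mul_sub_sum_choose_le [Nonempty α] (ι : Type*) [Fintype ι] (hδ : 0 ≤ δ)
    (hsep : (F : Set (Finset α)).Pairwise fun T T' => δ * Fintype.card α ≤ #(T ∆ T')) :
    Fintype.card ι * (δ / 2 * (#F - ∑ j ∈ Iic F.vcDim, (Fintype.card ι).choose j)) ≤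
      F.vcDim * #F := by
  classical
  set b : ℝ := δ / 2 * (#F - ∑ j ∈ Iic F.vcDim, (Fintype.card ι).choose j)
  have hα : (0 : ℝ) < Fintype.card α := Nat.cast_pos.2 Fintype.card_pos
  have hlower : ∀ i : ι, Fintype.card (ι → α) * b ≤
      ∑ x : ι → α, (edgeWeight (traceCount F x) i : ℝ) := fun i => by
    refine le_of_mul_le_mul_left ?_ hα
    calc Fintype.card α * (Fintype.card (ι → α) * b)
        = ∑ _x : ι → α, δ * Fintype.card α / 2 *
            (#F - ∑ j ∈ Iic F.vcDim, (Fintype.card ι).choose j : ℝ) := by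
          rw [sum_const, card_univ, nsmul_eq_mul]
          ring
      _ ≤ ∑ x, ∑ g, (edgeWeight (traceCount F (Function.update x i g)) i : ℝ) := by
          gcongr with x
          exact le_sum_edgeWeight_traceCount_update (by positivity) hsep x i
      _ = _ := by
          rw [sum_sum_update (fun x => (edgeWeight (traceCount F x) i : ℝ)) i, nsmul_eq_mul]
  have hN : (0 : ℝ) < Fintype.card (ι → α) := Nat.cast_pos.2 Fintype.card_pos
  refine le_of_mul_le_mul_left ?_ hN
  calc Fintype.card (ι → α) * (Fintype.card ι * b) = ∑ _i : ι, Fintype.card (ι → α) * b := by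
        rw [sum_const, card_univ, nsmul_eq_mul]
        ring
    _ ≤ ∑ i : ι, ∑ x : ι → α, (edgeWeight (traceCount F x) i : ℝ) := by
        gcongr with i
        exact hlower i
    _ = ∑ x : ι → α, ∑ i, (edgeWeight (traceCount F x) i : ℝ) := sum_comm
    _ ≤ ∑ _x : ι → α, (F.vcDim * #F : ℝ) := by
        gcongr with x
        exact_mod_cast sum_edgeWeight_traceCount_le F x
    _ = Fintype.card (ι → α) * (F.vcDim * #F) := by rw [sum_const, card_univ, nsmul_eq_mul]

theorem div_pow_mul_sum_choose_le_exp {d s : ℕ} (hds : d ≤ s) :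
    (d / s : ℝ) ^ d * ∑ j ∈ Iic d, (s.choose j : ℝ) ≤ Real.exp d := by
  set q : ℝ := d / s
  have hq₀ : 0 ≤ q := by positivity
  have hq₁ : q ≤ 1 := div_le_one_of_le₀ (by exact_mod_cast hds) (Nat.cast_nonneg s)
  have hsq : s * q = d := mul_div_cancel_of_imp' fun hs => by
    norm_cast at hs ⊢
    omega
  calc q ^ d * ∑ j ∈ Iic d, (s.choose j : ℝ) ≤ ∑ j ∈ Iic d, q ^ j * (s.choose j : ℝ) := by
        rw [mul_sum]
        gcongr ∑ j ∈ _, ?_ * _ with j hj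
        exact pow_le_pow_of_le_one hq₀ hq₁ (mem_Iic.1 hj)
    _ ≤ ∑ j ∈ range (s + 1), q ^ j * (s.choose j : ℝ) := by
        refine sum_le_sum_of_subset_of_nonneg (fun j hj => ?_) fun j _ _ => by positivity
        exact mem_range.2 (Nat.lt_succ_of_le ((mem_Iic.1 hj).trans hds))
    _ = (q + 1) ^ s := by simp only [add_pow, one_pow, mul_one]
    _ ≤ Real.exp q ^ s := by gcongr; exact Real.add_one_le_exp q
    _ = Real.exp d := by rw [← Real.exp_nat_mul, hsq]

theorem sum_choose_le_pow {d s : ℕ} (hd : 0 < d) (hds : d ≤ s) :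
    ∑ j ∈ Iic d, (s.choose j : ℝ) ≤ (3 * (s / d)) ^ d := by
  have hs : 0 < s := hd.trans_le hds
  have h : (d / s : ℝ) ^ d * ∑ j ∈ Iic d, (s.choose j : ℝ) ≤ 3 ^ d :=
    calc (d / s : ℝ) ^ d * ∑ j ∈ Iic d, (s.choose j : ℝ) ≤ Real.exp d :=
          div_pow_mul_sum_choose_le_exp hds
      _ = Real.exp 1 ^ d := (Real.exp_one_pow d).symm
      _ ≤ 3 ^ d := by gcongr; exact Real.exp_one_lt_three.le
  rw [← inv_div, mul_pow, inv_pow, ← div_eq_mul_inv]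
  exact (le_div_iff₀' (by positivity)).2 h

theorem card_le_two_mul_sum_choose {s : ℕ} (hδ : 0 ≤ δ)
    (hsep : (F : Set (Finset α)).Pairwise fun T T' => δ * Fintype.card α ≤ #(T ∆ T'))
    (hd : 0 < F.vcDim) (hs : 4 * F.vcDim ≤ s * δ) :
    (#F : ℝ) ≤ 2 * ∑ j ∈ Iic F.vcDim, (s.choose j : ℝ) := by
  have : Nonempty α :=
    Fintype.card_pos_iff.1 (hd.trans_le (vcDim_le_iff.2 fun t _ => card_le_univ t))
  have hcount := card_mul_sub_sum_choose_le (Fin s) hδ hsep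
  rw [Fintype.card_fin] at hcount
  push_cast at hcount
  set Φ : ℝ := ∑ j ∈ Iic F.vcDim, (s.choose j : ℝ)
  have hΦ : 0 ≤ Φ := by positivity
  have hd' : (0 : ℝ) < F.vcDim := Nat.cast_pos.2 hd
  rcases le_total (#F : ℝ) Φ with h | h
  · linarith
  have hd_mul : F.vcDim * (2 * (#F - Φ)) ≤ F.vcDim * (#F : ℝ) :=
    calc F.vcDim * (2 * (#F - Φ)) = 4 * F.vcDim * (#F - Φ) / 2 := by ring
      _ ≤ s * δ * (#F - Φ) / 2 := by gcongr
      _ = s * (δ / 2 * (#F - Φ)) := by ring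
      _ ≤ F.vcDim * #F := hcount
  linarith [le_of_mul_le_mul_left hd_mul hd']

/-- **Haussler's packing lemma**. -/
theorem card_le_pow_vcDim_of_separated (hδ₀ : 0 < δ) (hδ₁ : δ ≤ 1)
    (hsep : (F : Set (Finset α)).Pairwise fun T T' => δ * Fintype.card α ≤ #(T ∆ T')) :
    (#F : ℝ) ≤ (30 / δ) ^ F.vcDim := by
  rcases Nat.eq_zero_or_pos F.vcDim with hd | hd
  · have hF := card_le_sum_choose_vcDim F
    rw [hd, ← bot_eq_zero, Iic_bot, sum_singleton, bot_eq_zero, Nat.choose_zero_right] at hF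
    rw [hd, pow_zero]
    exact_mod_cast hF
  set d := F.vcDim
  have hd₁ : (1 : ℝ) ≤ d := by exact_mod_cast hd
  obtain ⟨s, hs_lower, hs_upper⟩ : ∃ s : ℕ, 4 * d ≤ s * δ ∧ s * δ ≤ 5 * d := by
    refine ⟨⌈4 * d / δ⌉₊, (div_le_iff₀ hδ₀).1 (Nat.le_ceil _), ?_⟩
    have h := (Nat.ceil_lt_add_one (by positivity : 0 ≤ 4 * d / δ)).le
    calc ⌈4 * d / δ⌉₊ * δ ≤ (4 * d / δ + 1) * δ := by gcongr
      _ = 4 * d + δ := by field_simp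
      _ ≤ 5 * d := by linarith
  have hds : d ≤ s := by
    have : (d : ℝ) ≤ s :=
      calc (d : ℝ) ≤ 4 * d := by linarith
        _ ≤ s * δ := hs_lower
        _ ≤ s := mul_le_of_le_one_right s.cast_nonneg hδ₁
    exact_mod_cast this
  calc (#F : ℝ) ≤ 2 * ∑ j ∈ Iic d, (s.choose j : ℝ) :=
        card_le_two_mul_sum_choose hδ₀.le hsep hd hs_lower
    _ ≤ 2 ^ d * (3 * (s / d)) ^ d := by
        gcongr
        · exact le_self_pow₀ one_le_two hd.ne'
        · exact sum_choose_le_pow hd hds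
    _ ≤ 2 ^ d * (15 / δ) ^ d := by
        gcongr 2 ^ d * ?_ ^ d
        rw [← mul_div_assoc, div_le_div_iff₀ (by positivity) hδ₀]
        linarith
    _ = (30 / δ) ^ d := by rw [← mul_pow]; congr 1; ring

end Haussler

end SetFamily

section Stabilizer

open scoped symmDiff

variable {G : Type*} [AddGroup G] [DecidableEq G]

/-- `A` has VC-dimension at most `k` relative to `H`: no `k + 1` points of `G` are shattered by the
sets `{g | g + y ∈ A}` with `y ∈ H`. -/
def VCDimLE (A : Finset G) (H : AddSubgroup G) (k : ℕ) : Prop :=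
  ¬ ∃ (x : Fin (k + 1) → G) (y : Set (Fin (k + 1)) → G),
    (∀ S, y S ∈ H) ∧
    ∀ (i : Fin (k + 1)) (S : Set (Fin (k + 1))), x i + y S ∈ (A : Set G) ↔ i ∈ S

theorem card_symmDiff_image_add_right (A : Finset G) (x y : G) :
    (A.image (· + x) ∆ A.image (· + y)).card = (A ∆ A.image (· + (y - x))).card := by
  have h : A.image (· + y) = (A.image (· + (y - x))).image (· + x) := by
    simp only [Finset.image_image, Function.comp_def, add_assoc, sub_add_cancel]
  rw [h, ← Finset.image_symmDiff _ _ (add_left_injective x),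
    Finset.card_image_of_injective _ (add_left_injective x)]

theorem VCDimLE.vcDim_image_translate_le {A : Finset G} {H : AddSubgroup G} {k : ℕ}
    (hA : VCDimLE A H k) {X : Finset G} (hX : (X : Set G) ⊆ H) :
    (X.image fun x => A.image (· + x)).vcDim ≤ k := by
  refine vcDim_le_iff.2 fun s hs => ?_
  by_contra! hcard
  obtain ⟨t, hts, ht⟩ := Finset.exists_subset_card_eq (Nat.succ_le_of_lt hcard)
  let e := t.equivFinOfCardEq ht
  have hy : ∀ S : Set (Fin (k + 1)), ∃ y ∈ H, ∀ i, (e.symm i : G) + y ∈ A ↔ i ∈ S := by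
    classical
    intro S
    obtain ⟨_, hT, hTS⟩ := hs.mono_right hts
      (Finset.filter_subset (fun g => ∃ i ∈ S, (e.symm i : G) = g) t)
    obtain ⟨x, hx, rfl⟩ := Finset.mem_image.1 hT
    refine ⟨-x, H.neg_mem (hX hx), fun i => ?_⟩
    have mem_translate : (e.symm i : G) ∈ A.image (· + x) ↔ i ∈ S := by
      simpa using Finset.ext_iff.1 hTS (e.symm i)
    rw [← mem_translate]
    simp
  choose y hyH hyA using hy
  exact hA ⟨fun i => e.symm i, y, hyH, fun i S => hyA S i⟩

variable [Fintype G]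

/-- The set `Stab_δ(A)` of `δ`-almost-periods of `A`. -/
def almostStabilizer (A : Finset G) (δ : ℝ) : Set G :=
  {x | ((A ∆ A.image (· + x)).card : ℝ) ≤ δ * Fintype.card G}

/-- The relation that the translates `A + x` and `A + y` differ in at most `δ|G|` elements; its
separated sets and covers drive the packing argument. -/
def translateProximity (A : Finset G) (δ : ℝ) : SetRel G G :=
  {p | ((A.image (· + p.1) ∆ A.image (· + p.2)).card : ℝ) ≤ δ * Fintype.card G}

theorem mem_translateProximity {A : Finset G} {δ : ℝ} {x y : G} :
    (x, y) ∈ translateProximity A δ ↔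
      ((A.image (· + x) ∆ A.image (· + y)).card : ℝ) ≤ δ * Fintype.card G :=
  Iff.rfl

theorem isRefl_translateProximity (A : Finset G) {δ : ℝ} (hδ : 0 ≤ δ) :
    (translateProximity A δ).IsRefl where
  refl x := by
    rw [mem_translateProximity, symmDiff_self, Finset.bot_eq_empty, Finset.card_empty,
      Nat.cast_zero]
    positivity

instance isSymm_translateProximity (A : Finset G) (δ : ℝ) : (translateProximity A δ).IsSymm where
  symm x y hxy := by rwa [mem_translateProximity, symmDiff_comm, ← mem_translateProximity]

theorem sub_mem_almostStabilizer_iff {A : Finset G} {δ : ℝ} {x y : G} :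
    y - x ∈ almostStabilizer A δ ↔ (x, y) ∈ translateProximity A δ := by
  rw [mem_translateProximity, card_symmDiff_image_add_right]
  rfl

theorem natCard_le_ncard_mul_of_isCover {A : Finset G} {H : AddSubgroup G} {δ : ℝ} {X : Set G}
    (hXH : X ⊆ H) (hX : (translateProximity A δ).IsCover H X) :
    Nat.card H ≤ X.ncard * ((H : Set G) ∩ almostStabilizer A δ).ncard := by
  set Z : Set G := H ∩ almostStabilizer A δ
  have hcover : (H : Set G) ⊆ Set.image2 (fun x z => z + x) X Z := by
    intro h hh
    obtain ⟨x, hx, hhx⟩ := hX hh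
    refine ⟨x, hx, h - x, ⟨H.sub_mem hh (hXH hx), ?_⟩, sub_add_cancel h x⟩
    exact sub_mem_almostStabilizer_iff.2 ((translateProximity A δ).symm hhx)
  calc Nat.card H = (H : Set G).ncard := rfl
    _ ≤ (Set.image2 (fun x z => z + x) X Z).ncard :=
        Set.ncard_le_ncard hcover (Set.toFinite _)
    _ ≤ (X ×ˢ Z).ncard := by
        rw [← Set.image_uncurry_prod]
        exact Set.ncard_image_le (Set.toFinite _)
    _ = X.ncard * Z.ncard := Set.ncard_prod

theorem VCDimLE.ncard_le_of_isSeparated {A : Finset G} {H : AddSubgroup G} {k : ℕ} {δ : ℝ}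
    (hA : VCDimLE A H k) (hδ₀ : 0 < δ) (hδ₁ : δ ≤ 1) {X : Set G} (hXH : X ⊆ H)
    (hX : (translateProximity A δ).IsSeparated X) : (X.ncard : ℝ) ≤ (30 / δ) ^ k := by
  lift X to Finset G using X.toFinite
  have hinj : Set.InjOn (fun x => A.image (· + x)) X :=
    fun x hx y hy (hxy : A.image (· + x) = A.image (· + y)) => hX.eq hx hy <| not_not.2 <| by
      rw [mem_translateProximity, ← hxy, ← mem_translateProximity]
      exact (isRefl_translateProximity A hδ₀.le).refl x
  have hsep : ((X.image fun x => A.image (· + x) : Finset (Finset G)) : Set (Finset G)).Pairwise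
      fun T T' => δ * Fintype.card G ≤ (T ∆ T').card := by
    rw [Finset.coe_image, hinj.pairwise_image]
    exact hX.imp fun x y hxy => (not_le.1 hxy).le
  calc ((X : Set G).ncard : ℝ) = (X.image fun x => A.image (· + x)).card := by
        rw [Set.ncard_coe_finset, Finset.card_image_of_injOn hinj]
    _ ≤ (30 / δ) ^ (X.image fun x => A.image (· + x)).vcDim :=
        card_le_pow_vcDim_of_separated hδ₀ hδ₁ hsep
    _ ≤ (30 / δ) ^ k := by
        gcongr
        · rw [one_le_div hδ₀]
          linarith
        · exact hA.vcDim_image_translate_le hXH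

theorem stmt_5_general (A : Finset G) (H : AddSubgroup G) (k : ℕ) (δ : ℝ) (hδ0 : 0 < δ)
    (hδ1 : δ ≤ 1) (hA : VCDimLE A H k) :
    (δ / 30) ^ k * Nat.card H ≤ ((H : Set G) ∩ almostStabilizer A δ).ncard := by
  set Z : Set G := H ∩ almostStabilizer A δ
  have := isRefl_translateProximity A hδ0.le
  obtain ⟨X, hX⟩ := Set.Finite.exists_maximal
    (Set.toFinite {X : Set G | X ⊆ H ∧ (translateProximity A δ).IsSeparated X})
    ⟨∅, Set.empty_subset _, .empty⟩
  have hcover : Nat.card H ≤ X.ncard * Z.ncard :=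
    natCard_le_ncard_mul_of_isCover hX.prop.1 (.of_maximal_isSeparated hX)
  have hpacking : (X.ncard : ℝ) ≤ (30 / δ) ^ k :=
    hA.ncard_le_of_isSeparated hδ0 hδ1 hX.prop.1 hX.prop.2
  calc (δ / 30) ^ k * Nat.card H
      ≤ (δ / 30) ^ k * (X.ncard * Z.ncard) := by
        gcongr
        exact_mod_cast hcover
    _ ≤ (δ / 30) ^ k * ((30 / δ) ^ k * Z.ncard) := by gcongr
    _ = Z.ncard := by
        have hδ : δ / 30 * (30 / δ) = 1 := by field_simp
        rw [← mul_assoc, ← mul_pow, hδ, one_pow, one_mul]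

end Stabilizer

/-- If `A` has VC-dimension at most `k` relative to `H`, then
`|Stab_δ(A) ∩ H| ≥ (δ/30)^k |H|`. -/
theorem stmt_5 {G : Type*} [AddCommGroup G] [Fintype G] [DecidableEq G]
    (A : Finset G) (H : AddSubgroup G) (k : ℕ) (δ : ℝ) (hδ0 : 0 < δ) (hδ1 : δ < 1)
    (hVC : ¬ ∃ (x : Fin (k+1) → G) (y : Set (Fin (k+1)) → G),
      (∀ S, y S ∈ H) ∧
      ∀ (i : Fin (k+1)) (S : Set (Fin (k+1))), x i + y S ∈ (A : Set G) ↔ i ∈ S) :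
    (δ / 30) ^ k * Nat.card H ≤
      ({x : G | x ∈ H ∧
        ((symmDiff A (A.image (· + x))).card : ℝ) ≤ δ * Fintype.card G}).ncard :=
  stmt_5_general A H k δ hδ0 hδ1.le hVC
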